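/- arXiv:1811.11901 — 2 statements merged into one kernel-verified Lean document; each statement's English description precedes it below -/
import Mathlib

section
/- Let N be a normal subgroup of a finite group G. The number of distinct (pairwise non-isomorphic) G-modules obtained by inducing the irreducible complex N-modules up to G equals the number of conjugacy classes of G that are contained in N. -/
open CategoryTheory

/-- The induced character `Ind_N^G φ` of a class function `φ` of a subgroup `N ≤ G`. -/
noncomputable def inducedChar {G : Type} [Group G] [Fintype G] (N : Subgroup G)
    [DecidablePred fun g => g ∈ N] (φ : ↥N → ℂ) : G → ℂ :=
  fun g => (Fintype.card N : ℂ)⁻¹ *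
    ∑ x : G, if h : x⁻¹ * g * x ∈ N then φ ⟨x⁻¹ * g * x, h⟩ else 0

section Completeness

open Representation

variable {H : Type} [Group H]

theorem Representation.asAlgebraHom_ofModule' {k : Type*} [Field k] (M : Type*) [AddCommGroup M]
    [Module k M] [Module (MonoidAlgebra k H) M] [IsScalarTower k (MonoidAlgebra k H) M] :
    (ofModule' (k := k) (G := H) M).asAlgebraHom = Algebra.lsmul k k M :=
  (MonoidAlgebra.lift k (M →ₗ[k] M) H).apply_symm_apply _

theorem Representation.isIrreducible_ofModule' {k : Type*} [Field k] (M : Type*) [AddCommGroup M]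
    [Module k M] [Module (MonoidAlgebra k H) M] [IsScalarTower k (MonoidAlgebra k H) M]
    [IsSimpleModule (MonoidAlgebra k H) M] :
    IsIrreducible (ofModule' (k := k) (G := H) M) := by
  rw [irreducible_iff_isSimpleModule_asModule]
  let ρ := ofModule' (k := k) (G := H) M
  let e : ρ.asModule ≃ₗ[MonoidAlgebra k H] M :=
    { ρ.asModuleEquiv with
      map_smul' := fun r x ↦ by
        have := ρ.asModuleEquiv_map_smul r x
        rwa [asAlgebraHom_ofModule'] at this }
  exact IsSimpleModule.congr e

variable [Fintype H]

theorem FDRep.simple_of_isIrreducible {V : Type} [AddCommGroup V] [Module ℂ V]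
    [FiniteDimensional ℂ V] (ρ : Representation ℂ H V) [IsIrreducible ρ] :
    Simple (FDRep.of ρ) := by
  have := invertibleOfNonzero (NeZero.ne (Nat.card H : ℂ))
  rw [FDRep.simple_iff_char_is_norm_one]
  have h := card_inv_mul_sum_char_mul_char_eq_finrank ρ ρ
  rw [IsIrreducible.finrank_intertwiningMap_self, Nat.cast_one,
    inv_mul_eq_one₀ (NeZero.ne _)] at h
  exact h.symm

theorem Representation.IsIrreducible.sum_smul_inv_eq_zero {V : Type} [AddCommGroup V] [Module ℂ V]
    [FiniteDimensional ℂ V] (ρ : Representation ℂ H V) [IsIrreducible ρ] {f : H → ℂ}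
    (hf : ∀ g h, f (h * g * h⁻¹) = f g) (h0 : ∑ h, f h * ρ.character h⁻¹ = 0) :
    ∑ h, f h • ρ h⁻¹ = 0 := by
  have hcomm (g : H) : (∑ h, f h • ρ h⁻¹) * ρ g = ρ g * ∑ h, f h • ρ h⁻¹ := by
    rw [Finset.sum_mul, Finset.mul_sum, ← (MulAut.conj g).sum_comp]
    refine Finset.sum_congr rfl fun h _ ↦ ?_
    rw [MulEquiv.toEquiv_eq_coe, MulEquiv.coe_toEquiv, MulAut.conj_apply, hf, smul_mul_assoc,
      mul_smul_comm, ← map_mul, ← map_mul]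
    congr 2
    group
  let T : IntertwiningMap ρ ρ := ⟨∑ h, f h • ρ h⁻¹, hcomm⟩
  obtain ⟨c, hc⟩ := (IsIrreducible.algebraMap_intertwiningMap_bijective_of_isAlgClosed (ρ := ρ)).2 T
  have hT : ∑ h, f h • ρ h⁻¹ = c • (1 : V →ₗ[ℂ] V) :=
    (congrArg IntertwiningMap.toLinearMap hc).symm
  have htr := congrArg (LinearMap.trace ℂ V) hT
  have : Nontrivial V := IsSimpleModule.nontrivial (MonoidAlgebra ℂ H) ρ.asModule
  have hdim : (Module.finrank ℂ V : ℂ) ≠ 0 := Nat.cast_ne_zero.2 Module.finrank_pos.ne'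
  rw [map_sum, map_smul, LinearMap.trace_one, smul_eq_mul] at htr
  simp only [map_smul, smul_eq_mul] at htr
  rw [(mul_eq_zero.1 (htr.symm.trans h0)).resolve_right hdim] at hT
  rw [hT, zero_smul]

theorem FDRep.sum_single_inv_smul_eq_zero {M : Type} [AddCommGroup M] [Module ℂ M]
    [FiniteDimensional ℂ M] [Module (MonoidAlgebra ℂ H) M]
    [IsScalarTower ℂ (MonoidAlgebra ℂ H) M] [IsSimpleModule (MonoidAlgebra ℂ H) M]
    {f : H → ℂ} (hf : ∀ g h, f (h * g * h⁻¹) = f g)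
    (h0 : ∀ V : FDRep ℂ H, Simple V → ∑ h, f h * V.character h⁻¹ = 0) (m : M) :
    (∑ h, MonoidAlgebra.single h⁻¹ (f h)) • m = 0 := by
  have := isIrreducible_ofModule' (k := ℂ) (H := H) M
  have key := IsIrreducible.sum_smul_inv_eq_zero (ofModule' (k := ℂ) (G := H) M) hf
    (by exact h0 _ (FDRep.simple_of_isIrreducible (ofModule' (k := ℂ) (G := H) M)))
  have hA : (ofModule' (k := ℂ) (G := H) M).asAlgebraHom
      (∑ h, MonoidAlgebra.single h⁻¹ (f h)) = 0 := by
    simpa only [map_sum, asAlgebraHom_single] using key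
  rw [asAlgebraHom_ofModule'] at hA
  exact LinearMap.congr_fun hA m

theorem FDRep.eq_zero_of_sum_mul_character_eq_zero {f : H → ℂ}
    (hf : ∀ g h, f (h * g * h⁻¹) = f g)
    (h0 : ∀ V : FDRep ℂ H, Simple V → ∑ h, f h * V.character h⁻¹ = 0) : f = 0 := by
  have ha : ∑ h, MonoidAlgebra.single h⁻¹ (f h) ∈
      Module.jacobson (MonoidAlgebra ℂ H) (MonoidAlgebra ℂ H) := by
    refine Submodule.mem_sInf.2 fun I hI ↦ ?_
    have := isSimpleModule_iff_isCoatom.2 hI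
    rw [← Submodule.Quotient.mk_eq_zero]
    simpa [← Submodule.Quotient.mk_smul] using
      sum_single_inv_smul_eq_zero hf h0 (Submodule.Quotient.mk (p := I) 1)
  rw [IsSemisimpleModule.jacobson_eq_bot, Submodule.mem_bot] at ha
  funext g
  have := DFunLike.congr_fun (congrArg MonoidAlgebra.coeff ha) g⁻¹
  classical
  simpa [Finsupp.single_apply] using this

end Completeness

namespace FDRep

variable {H : Type} [Group H]

/-- The twist of a representation by an automorphism of the group. -/
noncomputable def twist (α : MulAut H) (V : FDRep ℂ H) : FDRep ℂ H :=
  FDRep.of (V.ρ.comp α.toMonoidHom)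

theorem character_twist (α : MulAut H) (V : FDRep ℂ H) (h : H) :
    (V.twist α).character h = V.character (α h) :=
  rfl

theorem simple_twist [Fintype H] (α : MulAut H) (V : FDRep ℂ H) [hV : Simple V] :
    Simple (V.twist α) := by
  rw [simple_iff_char_is_norm_one] at hV ⊢
  rw [← hV, ← α.toEquiv.sum_comp fun h ↦ V.character h * V.character h⁻¹]
  simp [character_twist]

end FDRep

theorem ConjClasses.carrier_mk_subset_iff {G : Type*} [Group G] (N : Subgroup G) [N.Normal]
    (g : G) : (ConjClasses.mk g).carrier ⊆ N ↔ g ∈ N := by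
  refine ⟨fun h ↦ h ConjClasses.mem_carrier_mk, fun hg x hx ↦ ?_⟩
  obtain ⟨c, rfl⟩ := isConj_iff.1 (ConjClasses.mk_eq_mk_iff_isConj.1
    (ConjClasses.mem_carrier_iff_mk_eq.1 hx).symm)
  exact Subgroup.Normal.conj_mem ‹_› g hg c

section Induced

variable {G : Type} [Group G] [Fintype G] (N : Subgroup G) [DecidablePred fun g => g ∈ N]

theorem inducedChar_conj (φ : N → ℂ) (g h : G) :
    inducedChar N φ (h * g * h⁻¹) = inducedChar N φ g := by
  unfold inducedChar
  congr 1
  rw [← Equiv.sum_comp (Equiv.mulLeft h)]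
  refine Finset.sum_congr rfl fun x _ ↦ ?_
  have : (h * x)⁻¹ * (h * g * h⁻¹) * (h * x) = x⁻¹ * g * x := by group
  simp only [Equiv.coe_mulLeft, this]

variable [N.Normal]

theorem inducedChar_coe (φ : N → ℂ) (n : N) :
    inducedChar N φ n =
      (Fintype.card N : ℂ)⁻¹ * ∑ x : G, φ (MulAut.conjNormal x⁻¹ n) := by
  unfold inducedChar
  congr 1
  refine Finset.sum_congr rfl fun x _ ↦ ?_
  have h : MulAut.conjNormal x⁻¹ n =
      ⟨x⁻¹ * n * x, by simpa using (MulAut.conjNormal x⁻¹ n).2⟩ := by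
    ext; simp
  rw [h, dif_pos]

theorem inducedChar_of_notMem (φ : N → ℂ) {g : G} (hg : g ∉ N) : inducedChar N φ g = 0 := by
  unfold inducedChar
  refine mul_eq_zero_of_right _ (Finset.sum_eq_zero fun x _ ↦ dif_neg fun h ↦ hg ?_)
  simpa [mul_assoc] using Subgroup.Normal.conj_mem ‹_› _ h x

theorem inducedChar_comp_conjNormal (φ : N → ℂ) (y : G) :
    inducedChar N (fun n ↦ φ (MulAut.conjNormal y n)) = inducedChar N φ := by
  funext g
  by_cases hg : g ∈ N
  · lift g to N using hg
    rw [inducedChar_coe, inducedChar_coe, ← Equiv.sum_comp (Equiv.mulRight y)]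
    simp [← MulAut.mul_apply, ← map_mul]
  · rw [inducedChar_of_notMem N _ hg, inducedChar_of_notMem N _ hg]

/-- The bilinear pairing `∑ n ∈ N, s n * t n⁻¹`. -/
noncomputable def subgroupPairing (N : Subgroup G) [DecidablePred fun g => g ∈ N] :
    (G → ℂ) →ₗ[ℂ] (G → ℂ) →ₗ[ℂ] ℂ :=
  LinearMap.mk₂ ℂ (fun s t ↦ ∑ n : N, s n * t (n : G)⁻¹)
    (by simp [add_mul, Finset.sum_add_distrib]) (by simp [mul_assoc, Finset.mul_sum])
    (by simp [mul_add, Finset.sum_add_distrib]) (by simp [mul_left_comm, Finset.mul_sum])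

theorem subgroupPairing_inducedChar {f : G → ℂ} (hf : ∀ g h, f (h * g * h⁻¹) = f g)
    (φ : N → ℂ) :
    subgroupPairing N f (inducedChar N φ) =
      (Fintype.card N : ℂ)⁻¹ * (Fintype.card G * ∑ n : N, f n * φ n⁻¹) := by
  have h (x : G) : ∑ n : N, f n * φ (MulAut.conjNormal x⁻¹ n⁻¹) = ∑ n : N, f n * φ n⁻¹ := by
    rw [← (MulAut.conjNormal x⁻¹ : MulAut N).toEquiv.sum_comp (fun n : N ↦ f n * φ n⁻¹)]
    refine Finset.sum_congr rfl fun n _ ↦ ?_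
    simpa using Or.inl (by simpa using (hf n x⁻¹).symm)
  have hn (n : N) : (n : G)⁻¹ = ((n⁻¹ : N) : G) := rfl
  simp only [subgroupPairing, LinearMap.mk₂_apply, hn, inducedChar_coe, Finset.mul_sum,
    mul_left_comm _ (Fintype.card N : ℂ)⁻¹]
  rw [Finset.sum_comm]
  simp only [← Finset.mul_sum, h]
  simp

open scoped Classical in
theorem subgroupPairing_inducedChar_character (V W : FDRep ℂ N) [Simple V] [Simple W] :
    subgroupPairing N (inducedChar N V.character) (inducedChar N W.character) =
      (Fintype.card N : ℂ)⁻¹ * (Fintype.card G *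
        ∑ x : G, if Nonempty (V.twist (MulAut.conjNormal x⁻¹) ≅ W) then 1 else 0) := by
  have := invertibleOfNonzero (NeZero.ne (Nat.card N : ℂ))
  rw [subgroupPairing_inducedChar N (inducedChar_conj N _)]
  congr 2
  simp only [inducedChar_coe, mul_assoc, Finset.sum_mul]
  rw [← Finset.mul_sum, Finset.sum_comm, Finset.mul_sum]
  refine Finset.sum_congr rfl fun x _ ↦ ?_
  have := FDRep.simple_twist (MulAut.conjNormal x⁻¹) V
  rw [← Nat.card_eq_fintype_card, ← FDRep.char_orthonormal]
  rfl

theorem subgroupPairing_inducedChar_self_ne_zero (V : FDRep ℂ N) [Simple V] :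
    subgroupPairing N (inducedChar N V.character) (inducedChar N V.character) ≠ 0 := by
  classical
  rw [subgroupPairing_inducedChar_character, Finset.sum_boole]
  have h : (1 : G) ∈ Finset.univ.filter
      fun x : G ↦ Nonempty (V.twist (MulAut.conjNormal x⁻¹) ≅ V) := by
    have h1 : V.twist (MulAut.conjNormal (1 : G)⁻¹) = V := by
      rw [inv_one, map_one]; rfl
    simpa only [Finset.mem_filter, Finset.mem_univ, true_and, h1] using ⟨Iso.refl V⟩
  have := (Finset.card_pos.2 ⟨_, h⟩).ne'
  simp only [ne_eq, mul_eq_zero, inv_eq_zero, Nat.cast_eq_zero, Fintype.card_ne_zero, this,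
    or_self, not_false_eq_true]

theorem subgroupPairing_inducedChar_eq_zero (V W : FDRep ℂ N) [Simple V] [Simple W]
    (h : inducedChar N V.character ≠ inducedChar N W.character) :
    subgroupPairing N (inducedChar N V.character) (inducedChar N W.character) = 0 := by
  classical
  rw [subgroupPairing_inducedChar_character]
  refine mul_eq_zero_of_right _ (mul_eq_zero_of_right _ (Finset.sum_eq_zero fun x _ ↦
    if_neg fun ⟨i⟩ ↦ h ?_))
  rw [← FDRep.char_iso i]
  exact (inducedChar_comp_conjNormal N V.character x⁻¹).symm

/-- The space of class functions of `G` vanishing outside `N`. -/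
def classFunctionsOn (N : Subgroup G) : Submodule ℂ (G → ℂ) where
  carrier := {f | (∀ g h, f (h * g * h⁻¹) = f g) ∧ ∀ g ∉ N, f g = 0}
  zero_mem' := by simp
  add_mem' := by
    rintro a b ⟨ha, ha'⟩ ⟨hb, hb'⟩
    exact ⟨fun g h ↦ by simp [ha, hb], fun g hg ↦ by simp [ha' g hg, hb' g hg]⟩
  smul_mem' := by
    rintro c a ⟨ha, ha'⟩
    exact ⟨fun g h ↦ by simp [ha], fun g hg ↦ by simp [ha' g hg]⟩

theorem eq_zero_of_subgroupPairing_inducedChar_eq_zero {f : G → ℂ} (hf : f ∈ classFunctionsOn N)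
    (h : ∀ V : FDRep ℂ N, Simple V → subgroupPairing N f (inducedChar N V.character) = 0) :
    f = 0 := by
  have h0 : (fun n : N ↦ f n) = 0 := by
    refine FDRep.eq_zero_of_sum_mul_character_eq_zero (fun n m ↦ hf.1 n m) fun V hV ↦ ?_
    simpa [subgroupPairing_inducedChar N hf.1] using h V hV
  funext g
  by_cases hg : g ∈ N
  · exact congrFun h0 ⟨g, hg⟩
  · exact hf.2 g hg

theorem finrank_classFunctionsOn :
    Module.finrank ℂ (classFunctionsOn N) =
      Set.ncard {c : ConjClasses G | c.carrier ⊆ ↑N} := by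
  classical
  let C := {c : ConjClasses G | c.carrier ⊆ ↑N}
  let E : (C → ℂ) →ₗ[ℂ] (G → ℂ) :=
    { toFun := fun f g ↦ if h : ConjClasses.mk g ∈ C then f ⟨_, h⟩ else 0
      map_add' := fun a b ↦ by ext g; by_cases h : ConjClasses.mk g ∈ C <;> simp [h]
      map_smul' := fun a b ↦ by ext g; by_cases h : ConjClasses.mk g ∈ C <;> simp [h] }
  have hinj : Function.Injective E := by
    intro a b hab
    ext ⟨c, hc⟩
    obtain ⟨g, rfl⟩ := ConjClasses.exists_rep c
    simpa [E, hc] using congrFun hab g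
  have hrange : LinearMap.range E = classFunctionsOn N := by
    ext f
    constructor
    · rintro ⟨a, rfl⟩
      refine ⟨fun g h ↦ ?_, fun g hg ↦
        dif_neg fun h ↦ hg ((ConjClasses.carrier_mk_subset_iff N g).1 h)⟩
      have : ConjClasses.mk (h * g * h⁻¹) = ConjClasses.mk g :=
        ConjClasses.mk_eq_mk_iff_isConj.2 (isConj_iff.2 ⟨h, rfl⟩).symm
      simp only [E, LinearMap.coe_mk, AddHom.coe_mk, this]
    · rintro ⟨hf, hf'⟩
      refine ⟨fun c ↦ Quotient.lift f (fun a b hab ↦ ?_) c.1, ?_⟩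
      · obtain ⟨c, rfl⟩ := isConj_iff.1 hab
        exact (hf a c).symm
      · ext g
        by_cases hg : g ∈ N
        · exact dif_pos ((ConjClasses.carrier_mk_subset_iff N g).2 hg)
        · exact (dif_neg fun h ↦ hg ((ConjClasses.carrier_mk_subset_iff N g).1 h)).trans
            (hf' g hg).symm
  rw [← hrange, LinearMap.finrank_range_of_inj hinj, Module.finrank_fintype_fun_eq_card,
    ← Nat.card_eq_fintype_card, Nat.card_coe_set_eq]

end Induced

/-- For `N ⊴ G`, the number of distinct `G`-modules induced from irreducible complex
`N`-modules (counted via their characters, which determine complex modules up to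
isomorphism) equals the number of conjugacy classes of `G` contained in `N`. -/
theorem card_induced_eq_card_conjClasses {G : Type} [Group G] [Fintype G] (N : Subgroup G)
    [N.Normal] [DecidablePred fun g => g ∈ N] :
    Set.ncard {f : G → ℂ | ∃ V : FDRep ℂ ↥N, Simple V ∧ f = inducedChar N V.character} =
      Set.ncard {c : ConjClasses G | c.carrier ⊆ ↑N} := by
  rw [← finrank_classFunctionsOn]
  set S := {f : G → ℂ | ∃ V : FDRep ℂ ↥N, Simple V ∧ f = inducedChar N V.character}
  have hli : LinearIndependent ℂ ((↑) : S → G → ℂ) := by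
    refine LinearMap.linearIndependent_of_isOrthoᵢ (B := subgroupPairing N) ?_ ?_
    · rintro ⟨_, V, hV, rfl⟩ ⟨_, W, hW, rfl⟩ hne
      exact subgroupPairing_inducedChar_eq_zero N V W fun h ↦ hne (Subtype.ext h)
    · rintro ⟨_, V, hV, rfl⟩
      exact subgroupPairing_inducedChar_self_ne_zero N V
  have hmem (s : S) : (s : G → ℂ) ∈ classFunctionsOn N := by
    obtain ⟨_, V, hV, rfl⟩ := s
    exact ⟨inducedChar_conj N _, fun g hg ↦ inducedChar_of_notMem N _ hg⟩
  have : Finite S := hli.finite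
  have := Fintype.ofFinite S
  rw [← Nat.card_coe_set_eq, Nat.card_eq_fintype_card]
  apply le_antisymm
  · exact LinearIndependent.fintype_card_le_finrank
      (b := fun s : S ↦ (⟨s, hmem s⟩ : classFunctionsOn N))
      (LinearIndependent.of_comp (classFunctionsOn N).subtype hli)
  · let Φ : classFunctionsOn N →ₗ[ℂ] (S → ℂ) :=
      LinearMap.pi fun s ↦ (subgroupPairing N).flip s ∘ₗ (classFunctionsOn N).subtype
    have hΦ : Function.Injective Φ := by
      refine (injective_iff_map_eq_zero Φ).2 fun f hf ↦ Subtype.ext ?_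
      exact eq_zero_of_subgroupPairing_inducedChar_eq_zero N f.2 fun V hV ↦
        congrFun hf ⟨_, V, hV, rfl⟩
    simpa using LinearMap.finrank_le_finrank_of_injective hΦ
end

section
/- For the pair A₄ ⊴ S₄ with V the 3-dimensional irreducible A₄-module (restriction of the standard S₄-module), the Poincaré series of A₄-invariants in the tensor algebra T(V) equals (1-2t-2t²)/(1-2t-3t²) as a formal power series, i.e., ∑_{k≥0} dim((V^{⊗k})^{A₄}) t^k = (1-2t-2t²)/((1-3t)(1+t)). -/
open CategoryTheory MonoidalCategory PowerSeries

namespace AlternatingGroupFour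

/-- The double transposition `(0 1)(2 3)`. -/
def doubleTransposition : alternatingGroup (Fin 4) :=
  ⟨Equiv.swap 0 1 * Equiv.swap 2 3, Equiv.Perm.mem_alternatingGroup.2 (by decide)⟩

/-- The `3`-cycle `(0 1 2)`. -/
def threeCycle : alternatingGroup (Fin 4) :=
  ⟨Equiv.swap 0 1 * Equiv.swap 1 2, Equiv.Perm.mem_alternatingGroup.2 (by decide)⟩

/-- A chosen representative of the conjugacy class of an element of `A₄`. -/
def classRep (g : alternatingGroup (Fin 4)) : alternatingGroup (Fin 4) :=
  if g = 1 then 1 else if g * g = 1 then doubleTransposition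
  else if ∃ h, h * threeCycle * h⁻¹ = g then threeCycle else threeCycle⁻¹

set_option maxRecDepth 100000 in
theorem exists_conj_classRep (g : alternatingGroup (Fin 4)) : ∃ h, h * classRep g * h⁻¹ = g := by
  revert g
  decide

set_option maxRecDepth 100000 in
theorem sum_classRep {M : Type*} [AddCommMonoid M] (f : alternatingGroup (Fin 4) → M) :
    ∑ g, f (classRep g) =
      f 1 + 3 • f doubleTransposition + 4 • f threeCycle + 4 • f threeCycle⁻¹ := by
  have h : ∀ a, (Finset.univ.filter fun g => classRep g = a).card =
      if a = 1 then 1 else if a = doubleTransposition then 3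
      else if a = threeCycle then 4 else if a = threeCycle⁻¹ then 4 else 0 := by
    decide
  have himage : Finset.univ.image classRep =
      {1, doubleTransposition, threeCycle, threeCycle⁻¹} := by
    decide
  rw [Finset.sum_comp f classRep, himage, Finset.sum_insert (by decide),
    Finset.sum_insert (by decide), Finset.sum_insert (by decide), Finset.sum_singleton]
  have h1 := h 1
  have hd := h doubleTransposition
  have hc := h threeCycle
  have hi := h threeCycle⁻¹
  rw [if_pos rfl] at h1
  rw [if_neg (by decide), if_pos rfl] at hd
  rw [if_neg (by decide), if_neg (by decide), if_pos rfl] at hc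
  rw [if_neg (by decide), if_neg (by decide), if_neg (by decide), if_pos rfl] at hi
  rw [h1, hd, hc, hi, one_smul]
  simp only [add_assoc]

theorem sum_eq_of_conj_invariant {M : Type*} [AddCommMonoid M]
    (f : alternatingGroup (Fin 4) → M) (hf : ∀ g h, f (h * g * h⁻¹) = f g) :
    ∑ g, f g =
      f 1 + 3 • f doubleTransposition + 4 • f threeCycle + 4 • f threeCycle⁻¹ := by
  rw [← sum_classRep]
  refine Finset.sum_congr rfl fun g _ => ?_
  obtain ⟨h, hh⟩ := exists_conj_classRep g
  conv_lhs => rw [← hh, hf]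

theorem card_eq : Nat.card (alternatingGroup (Fin 4)) = 12 := by
  rw [Nat.card_eq_fintype_card]
  decide

end AlternatingGroupFour

/-- The trace of an involution of a finite-dimensional space is `2r - n`, with `r` the dimension
of its fixed space and `n` the dimension of the space. -/
theorem LinearMap.exists_trace_eq_of_mul_self_eq_one {K M : Type*} [Field K] [NeZero (2 : K)]
    [AddCommGroup M] [Module K M] [FiniteDimensional K M] (f : M →ₗ[K] M) (hf : f * f = 1) :
    ∃ r ≤ Module.finrank K M, LinearMap.trace K M f = 2 * r - Module.finrank K M := by
  have h2 : (2 : K) ≠ 0 := NeZero.ne _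
  set e : M →ₗ[K] M := (2 : K)⁻¹ • (1 + f) with he
  have hidem : IsIdempotentElem e := by
    have h : (1 + f) * (1 + f) = (2 : K) • (1 + f) := by
      rw [mul_add, add_mul, add_mul, hf, two_smul]
      simp only [one_mul, mul_one]
      abel
    rw [IsIdempotentElem, he, smul_mul_smul_comm, h, smul_smul]
    congr 1
    field_simp
  refine ⟨Module.finrank K (LinearMap.range e), Submodule.finrank_le _, ?_⟩
  have htr := (LinearMap.IsIdempotentElem.isProj_range e hidem).trace
  rw [← htr, he, map_smul, map_add, LinearMap.trace_one, smul_eq_mul]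
  field_simp
  ring

namespace FDRep

open AlternatingGroupFour

universe u

theorem character_tensorUnit {k G : Type*} [Field k] [Monoid G] (g : G) :
    (𝟙_ (FDRep k G)).character g = 1 := by
  change LinearMap.trace k k LinearMap.id = 1
  simp

theorem simple_tensorUnit {k G : Type u} [Field k] [IsAlgClosed k] [CharZero k] [Group G]
    [Fintype G] : Simple (𝟙_ (FDRep k G)) := by
  rw [simple_iff_char_is_norm_one]
  simp [character_tensorUnit, Nat.card_eq_fintype_card]

theorem sum_character_eq_zero_of_simple {k G : Type u} [Field k] [IsAlgClosed k] [CharZero k]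
    [Group G] [Fintype G] (V : FDRep k G) [Simple V] (hV : Module.finrank k V ≠ 1) :
    ∑ g, V.character g = 0 := by
  have hcard : (Nat.card G : k) ≠ 0 := Nat.cast_ne_zero.2 Nat.card_pos.ne'
  have := invertibleOfNonzero hcard
  have := simple_tensorUnit (k := k) (G := G)
  have hiso : ¬ Nonempty (V ≅ 𝟙_ (FDRep k G)) := by
    rintro ⟨i⟩
    apply hV
    have h := congrFun (char_iso i) 1
    rw [char_one, character_tensorUnit] at h
    exact_mod_cast h
  have h := char_orthonormal V (𝟙_ (FDRep k G))
  rw [if_neg hiso] at h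
  simpa [character_tensorUnit, hcard] using h

theorem sum_character_eq_card_mul_finrank_invariants {k G : Type u} [Field k] [CharZero k]
    [Group G] [Fintype G] (V : FDRep k G) :
    ∑ g, V.character g = Nat.card G * Module.finrank k (Representation.invariants V.ρ) := by
  have hcard : (Nat.card G : k) ≠ 0 := Nat.cast_ne_zero.2 Nat.card_pos.ne'
  have := invertibleOfNonzero hcard
  rw [← average_char_eq_finrank_invariants, mul_inv_cancel_left₀ hcard]

theorem exists_character_eq_of_mul_self_eq_one {k G : Type*} [Field k] [NeZero (2 : k)]
    [Group G] (V : FDRep k G) {g : G} (hg : g * g = 1) :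
    ∃ r ≤ Module.finrank k V, V.character g = 2 * r - Module.finrank k V :=
  LinearMap.exists_trace_eq_of_mul_self_eq_one (V.ρ g) (by rw [← map_mul, hg, map_one])

theorem character_of_simple_alternatingGroup_four (V : FDRep ℂ (alternatingGroup (Fin 4)))
    [Simple V] (hdim : Module.finrank ℂ V = 3) :
    V.character doubleTransposition = -1 ∧ V.character threeCycle = 0 ∧
      V.character threeCycle⁻¹ = 0 := by
  have hinv : (doubleTransposition)⁻¹ = doubleTransposition := by decide
  have hconj := V.char_conj
  have hone : V.character 1 = 3 := by rw [char_one, hdim]; norm_num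
  have hsum := V.sum_character_eq_zero_of_simple (by omega)
  rw [sum_eq_of_conj_invariant _ hconj] at hsum
  have hnorm := (simple_iff_char_is_norm_one V).1 inferInstance
  rw [sum_eq_of_conj_invariant (fun g => V.character g * V.character g⁻¹)
    (fun g h => by
      have : (h * g * h⁻¹)⁻¹ = h * g⁻¹ * h⁻¹ := by group
      simp only [this, hconj])] at hnorm
  have hsq := (V ⊗ V).sum_character_eq_card_mul_finrank_invariants
  have hcube := (V ⊗ (V ⊗ V)).sum_character_eq_card_mul_finrank_invariants
  rw [sum_eq_of_conj_invariant _ (char_conj _)] at hsq hcube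
  obtain ⟨r, hr, hd⟩ := V.exists_character_eq_of_mul_self_eq_one
    (g := doubleTransposition) (by decide)
  generalize Module.finrank ℂ (Representation.invariants (V ⊗ V).ρ) = m at hsq
  generalize Module.finrank ℂ (Representation.invariants (V ⊗ (V ⊗ V)).ρ) = n at hcube
  simp only [char_tensor, Pi.mul_apply, card_eq, hinv, inv_inv, inv_one, hone, nsmul_eq_mul,
    Nat.cast_ofNat] at hsum hnorm hsq hcube
  rw [hdim] at hr hd
  generalize V.character doubleTransposition = b at *
  generalize V.character threeCycle = x at *
  generalize V.character threeCycle⁻¹ = y at *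
  interval_cases r
  · have h : (12 * m : ℂ) = 69 := by
      subst hd
      push_cast at *
      have hs : x + y = 3 / 2 := by linear_combination hsum / 4
      linear_combination -hsq + hnorm * (-1) + 4 * (x + y + 3 / 2) * hs
    have h' : 12 * m = 69 := by exact_mod_cast h
    omega
  · subst hd
    push_cast at *
    have hs : y = -x := by linear_combination hsum / 4
    have hx : x = 0 := by
      subst hs
      have : x ^ 2 = 0 := by linear_combination -hnorm / 8
      exact pow_eq_zero_iff two_ne_zero |>.1 this
    subst hx
    refine ⟨by norm_num, rfl, by simpa using hs⟩
  · have h : (12 * m : ℂ) = 21 := by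
      subst hd
      push_cast at *
      have hs : x + y = -3 / 2 := by linear_combination hsum / 4
      linear_combination -hsq + hnorm * (-1) + 4 * (x + y - 3 / 2) * hs
    have h' : 12 * m = 21 := by exact_mod_cast h
    omega
  · have h : (12 * n + 108 : ℂ) = 0 := by
      subst hd
      push_cast at *
      have hs : y = -3 - x := by linear_combination hsum / 4
      have hp : x * y = -3 := by linear_combination hnorm / 8
      subst hs
      linear_combination -hcube + 36 * hp
    have h' : 12 * n + 108 = 0 := by exact_mod_cast h
    omega

theorem character_tensorPower {k G : Type*} [Field k] [Monoid G] (V : FDRep k G)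
    (P : ℕ → FDRep k G) (hP0 : P 0 = 𝟙_ (FDRep k G)) (hPs : ∀ n, P (n + 1) = V ⊗ P n)
    (n : ℕ) (g : G) : (P n).character g = V.character g ^ n := by
  induction n with
  | zero => rw [hP0, character_tensorUnit, pow_zero]
  | succ n ih => rw [hPs, char_tensor, Pi.mul_apply, ih, pow_succ']

theorem twelve_mul_finrank_invariants_tensorPower (V : FDRep ℂ (alternatingGroup (Fin 4)))
    [Simple V] (hdim : Module.finrank ℂ V = 3)
    (P : ℕ → FDRep ℂ (alternatingGroup (Fin 4)))
    (hP0 : P 0 = 𝟙_ (FDRep ℂ (alternatingGroup (Fin 4))))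
    (hPs : ∀ k, P (k + 1) = V ⊗ P k) (n : ℕ) :
    (12 * Module.finrank ℂ (Representation.invariants (P n).ρ) : ℤ) =
      3 ^ n + 3 * (-1) ^ n + 8 * 0 ^ n := by
  obtain ⟨hd, hc, hi⟩ := character_of_simple_alternatingGroup_four V hdim
  have h := (P n).sum_character_eq_card_mul_finrank_invariants
  rw [sum_eq_of_conj_invariant _ (char_conj _)] at h
  simp only [character_tensorPower V P hP0 hPs, hd, hc, hi, char_one, hdim, card_eq,
    nsmul_eq_mul, Nat.cast_ofNat] at h
  have h' : (12 * Module.finrank ℂ (Representation.invariants (P n).ρ) : ℂ) =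
      3 ^ n + 3 * (-1) ^ n + 8 * 0 ^ n := by
    linear_combination -h
  exact_mod_cast h'

end FDRep

/-- For the pair `A₄ ⊴ S₄` with `V` the 3-dimensional irreducible `A₄`-module (the
restriction of the standard `S₄`-module), the Poincaré series of `A₄`-invariants in the
tensor algebra `T(V)` equals `(1 - 2t - 2t²)/((1 - 3t)(1 + t))` in `ℚ[[t]]`. -/
theorem poincare_series_A4 (V : FDRep ℂ (alternatingGroup (Fin 4)))
    (hsimple : Simple V) (hdim : Module.finrank ℂ V = 3)
    (P : ℕ → FDRep ℂ (alternatingGroup (Fin 4)))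
    (hP0 : P 0 = 𝟙_ (FDRep ℂ (alternatingGroup (Fin 4))))
    (hPs : ∀ k, P (k + 1) = V ⊗ P k) :
    (PowerSeries.mk fun k => (Module.finrank ℂ (Representation.invariants (P k).ρ) : ℚ)) =
      (1 - 2 * (PowerSeries.X : PowerSeries ℚ) - 2 * PowerSeries.X ^ 2) *
        ((1 - 3 * (PowerSeries.X : PowerSeries ℚ)) * (1 + PowerSeries.X))⁻¹ := by
  have ha (n : ℕ) : (Module.finrank ℂ (Representation.invariants (P n).ρ) : ℚ) =
      (3 ^ n + 3 * (-1) ^ n + 8 * 0 ^ n) / 12 := by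
    have h := FDRep.twelve_mul_finrank_invariants_tensorPower V hdim P hP0 hPs n
    have h' : (12 * Module.finrank ℂ (Representation.invariants (P n).ρ) : ℚ) =
        3 ^ n + 3 * (-1) ^ n + 8 * 0 ^ n := by exact_mod_cast h
    linear_combination h' / 12
  simp_rw [ha]
  rw [PowerSeries.eq_mul_inv_iff_mul_eq (by simp)]
  have hden : (1 - 3 * (PowerSeries.X : PowerSeries ℚ)) * (1 + PowerSeries.X) =
      1 - PowerSeries.C 2 * PowerSeries.X - PowerSeries.C 3 * PowerSeries.X ^ 2 := by
    simp only [map_ofNat]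
    ring
  have hnum : 1 - 2 * (PowerSeries.X : PowerSeries ℚ) - 2 * PowerSeries.X ^ 2 =
      1 - PowerSeries.C 2 * PowerSeries.X - PowerSeries.C 2 * PowerSeries.X ^ 2 := by
    simp only [map_ofNat]
  rw [hden, hnum, mul_comm]
  ext n
  rcases n with _ | _ | _ | n <;>
    simp [sub_mul, mul_assoc, pow_two, PowerSeries.coeff_succ_X_mul, PowerSeries.coeff_one,
      PowerSeries.coeff_X, PowerSeries.coeff_C_mul] <;> ring
end
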